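/- Let Γ be a group acting on compact metric spaces X and Y such that every γ ∈ Γ acts on X as a Lipschitz homeomorphism and on Y as a Lipschitz homeomorphism, and assume every Γ-orbit in X is dense in X. Let f : X → Y be a homeomorphism with f(γ·x) = γ·f(x) for all γ ∈ Γ and x ∈ X. Let κ > 0 and suppose there exist a nonempty open set U ⊆ X and C ≥ 1 such that C⁻¹·d(x,y)^κ ≤ d(f(x),f(y)) ≤ C·d(x,y)^κ for all x, y ∈ U. Then there exists C' ≥ 1 such that C'⁻¹·d(x,y)^κ ≤ d(f(x),f(y)) ≤ C'·d(x,y)^κ for all x, y ∈ X. -/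

import Mathlib

open Metric Filter Topology

/-- On a compact space, a continuous function `a` is bounded by a multiple of a nonnegative
continuous function `b` as soon as this holds near every zero of `b`. -/
theorem exists_forall_le_mul_of_eventually_of_eq_zero {Z : Type*} [TopologicalSpace Z]
    [CompactSpace Z] {a b : Z → ℝ} (ha : Continuous a) (hb : Continuous b) (hb0 : ∀ z, 0 ≤ b z)
    (h : ∀ z, b z = 0 → ∃ K : ℝ, ∀ᶠ w in 𝓝 z, a w ≤ K * b w) :
    ∃ K : ℝ, ∀ z, a z ≤ K * b z := by
  suffices H : ∃ K : ℝ, ∀ z ∈ (Set.univ : Set Z), a z ≤ K * b z by simpa using H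
  refine isCompact_univ.induction_on (p := fun s => ∃ K : ℝ, ∀ z ∈ s, a z ≤ K * b z)
    ⟨0, by simp⟩ (fun s t hst ⟨K, hK⟩ => ⟨K, fun z hz => hK z (hst hz)⟩) ?_ ?_
  · rintro s t ⟨K, hK⟩ ⟨L, hL⟩
    refine ⟨max K L, fun z hz => ?_⟩
    rcases hz with hz | hz
    · exact (hK z hz).trans (mul_le_mul_of_nonneg_right (le_max_left _ _) (hb0 z))
    · exact (hL z hz).trans (mul_le_mul_of_nonneg_right (le_max_right _ _) (hb0 z))
  · intro z _
    obtain ⟨K, hK⟩ : ∃ K : ℝ, ∀ᶠ w in 𝓝 z, a w ≤ K * b w := by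
      rcases (hb0 z).eq_or_lt with hz | hz
      · exact h z hz.symm
      · refine ⟨a z / b z + 1, ?_⟩
        have hlt : a z < (a z / b z + 1) * b z := by
          rw [add_mul, div_mul_cancel₀ _ hz.ne']
          linarith
        exact (ha.continuousAt.eventually_lt (continuous_const.mul hb).continuousAt hlt).mono
          fun w hw => hw.le
    exact ⟨_, mem_nhdsWithin_of_mem_nhds hK, K, fun w hw => hw⟩

theorem LipschitzWith.rpow_dist_le_mul {X Y : Type*} [PseudoMetricSpace X] [PseudoMetricSpace Y]
    {L : NNReal} {g : X → Y} (hg : LipschitzWith L g) {κ : ℝ} (hκ : 0 ≤ κ) (x y : X) :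
    dist (g x) (g y) ^ κ ≤ (L : ℝ) ^ κ * dist x y ^ κ := by
  rw [← Real.mul_rpow L.coe_nonneg dist_nonneg]
  exact Real.rpow_le_rpow dist_nonneg (hg.dist_le_mul x y) hκ

theorem local_biHolder_implies_global_biHolder
    {Γ X Y : Type*} [Group Γ]
    [MetricSpace X] [CompactSpace X] [MetricSpace Y] [CompactSpace Y]
    [MulAction Γ X] [MulAction Γ Y]
    (hLipX : ∀ γ : Γ, ∃ L : NNReal, LipschitzWith L (fun x : X => γ • x))
    (hLipY : ∀ γ : Γ, ∃ L : NNReal, LipschitzWith L (fun y : Y => γ • y))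
    (hmin : ∀ x : X, Dense (MulAction.orbit Γ x : Set X))
    (f : X ≃ₜ Y) (hequiv : ∀ (γ : Γ) (x : X), f (γ • x) = γ • f x)
    (κ : ℝ) (hκ : 0 < κ)
    (U : Set X) (hUopen : IsOpen U) (hUne : U.Nonempty)
    (C : ℝ) (hC : 1 ≤ C)
    (hloc : ∀ x ∈ U, ∀ y ∈ U,
      C⁻¹ * dist x y ^ κ ≤ dist (f x) (f y) ∧ dist (f x) (f y) ≤ C * dist x y ^ κ) :
    ∃ C' : ℝ, 1 ≤ C' ∧ ∀ x y : X,
      C'⁻¹ * dist x y ^ κ ≤ dist (f x) (f y) ∧ dist (f x) (f y) ≤ C' * dist x y ^ κ := by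
  have hC0 : 0 < C := one_pos.trans_le hC
  have hcX : Continuous fun p : X × X => dist p.1 p.2 ^ κ :=
    continuous_dist.rpow_const fun _ => Or.inr hκ.le
  have hcY : Continuous fun p : X × X => dist (f p.1) (f p.2) := by fun_prop
  have hmove : ∀ x : X, ∃ γ : Γ, ∀ᶠ p in 𝓝 (x, x), γ • p.1 ∈ U ∧ γ • p.2 ∈ U := by
    intro x
    obtain ⟨_, ⟨γ, rfl⟩, hU⟩ := (hmin x).exists_mem_open hUopen hUne
    obtain ⟨L, hL⟩ := hLipX γ
    have hx : ∀ᶠ y in 𝓝 x, γ • y ∈ U := hL.continuous.continuousAt (hUopen.mem_nhds hU)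
    exact ⟨γ, hx.prod_nhds hx⟩
  obtain ⟨K, hK⟩ := exists_forall_le_mul_of_eventually_of_eq_zero hcY hcX
    (fun p => Real.rpow_nonneg dist_nonneg κ) (by
      rintro ⟨x, y⟩ hxy
      obtain rfl : x = y := dist_eq_zero.1 ((Real.rpow_eq_zero dist_nonneg hκ.ne').1 hxy)
      obtain ⟨γ, hγ⟩ := hmove x
      obtain ⟨L, hL⟩ := hLipX γ
      obtain ⟨M, hM⟩ := hLipY γ⁻¹
      refine ⟨M * (C * (L : ℝ) ^ κ), hγ.mono fun p hp => ?_⟩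
      calc dist (f p.1) (f p.2)
          ≤ M * dist (f (γ • p.1)) (f (γ • p.2)) := by
            simpa [hequiv] using hM.dist_le_mul (f (γ • p.1)) (f (γ • p.2))
        _ ≤ M * (C * dist (γ • p.1) (γ • p.2) ^ κ) := by
            gcongr
            exact (hloc _ hp.1 _ hp.2).2
        _ ≤ M * (C * ((L : ℝ) ^ κ * dist p.1 p.2 ^ κ)) := by
            gcongr
            exact hL.rpow_dist_le_mul hκ.le _ _
        _ = M * (C * (L : ℝ) ^ κ) * dist p.1 p.2 ^ κ := by ring)
  obtain ⟨K', hK'⟩ := exists_forall_le_mul_of_eventually_of_eq_zero hcX hcY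
    (fun p => dist_nonneg) (by
      rintro ⟨x, y⟩ hxy
      obtain rfl : x = y := f.injective (dist_eq_zero.1 hxy)
      obtain ⟨γ, hγ⟩ := hmove x
      obtain ⟨L, hL⟩ := hLipX γ⁻¹
      obtain ⟨M, hM⟩ := hLipY γ
      refine ⟨(L : ℝ) ^ κ * (C * M), hγ.mono fun p hp => ?_⟩
      calc dist p.1 p.2 ^ κ
          ≤ (L : ℝ) ^ κ * dist (γ • p.1) (γ • p.2) ^ κ := by
            simpa using hL.rpow_dist_le_mul hκ.le (γ • p.1) (γ • p.2)
        _ ≤ (L : ℝ) ^ κ * (C * dist (f (γ • p.1)) (f (γ • p.2))) := by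
            gcongr
            exact (inv_mul_le_iff₀ hC0).1 (hloc _ hp.1 _ hp.2).1
        _ ≤ (L : ℝ) ^ κ * (C * (M * dist (f p.1) (f p.2))) := by
            gcongr
            simpa [hequiv] using hM.dist_le_mul (f p.1) (f p.2)
        _ = (L : ℝ) ^ κ * (C * M) * dist (f p.1) (f p.2) := by ring)
  refine ⟨max 1 (max K K'), le_max_left _ _, fun x y => ⟨?_, ?_⟩⟩
  · rw [inv_mul_le_iff₀ (one_pos.trans_le (le_max_left _ _))]
    exact (hK' (x, y)).trans (mul_le_mul_of_nonneg_right (by simp) dist_nonneg)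
  · exact (hK (x, y)).trans
      (mul_le_mul_of_nonneg_right (by simp) (Real.rpow_nonneg dist_nonneg κ))
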